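/- arXiv:1911.12877 — 3 statements merged into one kernel-verified Lean document; each statement's English description precedes it below -/
import Mathlib

section
/- Let P be a finite simple graph on a vertex set V with n vertices, let S : Fin n ≃ V be a schedule, and let L(P, S) be the restriction set generated from the automorphism group of P and S. Let H be a simple graph whose vertex set carries a linear order. Then for every induced embedding M₀ of P into H there exists exactly one induced embedding M of P into H with range M = range M₀ such that M (S i) > M (S k) for every pair (i, k) ∈ L(P, S). -/
/-!
Two induced embeddings of `P` into `H` have the same range exactly when they differ by an
automorphism of `P` (`exists_aut_of_range_eq`), so the claim concerns the finite set of
embeddings `M₀ ∘ φ` with `φ` an automorphism.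

Existence: choose `φ` so that the tuple `(M₀ (φ (S 0)), M₀ (φ (S 1)), …)` is lexicographically
largest. A pair `(i, k)` in the restriction set comes from an automorphism `ψ` fixing `S j` for
`j < i`; passing from `M` to `M ∘ ψ` keeps the first `i` entries and replaces `M (S i)` by
`M (S k)`, so a violated restriction would contradict maximality.

Uniqueness: if a restricted embedding `M` agrees with `M'` on `S j` for `j < i`, then
`M' (S i) ≤ M (S i)` (`le_of_restricted`). When both embeddings are restricted, they therefore
agree at every `S i`, by strong induction on `i`.
-/

/-- The restriction set generated from the automorphism group of `P` and schedule `S`: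
pairs `(i, k)` with `k ≠ i` such that some automorphism of `P` fixes `S j` for all `j < i`
and sends `S i` to `S k`. -/
def restrictionSet {n : ℕ} {V : Type*} (P : SimpleGraph V) (S : Fin n ≃ V) :
    Set (Fin n × Fin n) :=
  {p | p.2 ≠ p.1 ∧ ∃ φ : P ≃g P, (∀ j, j < p.1 → φ (S j) = S j) ∧ φ (S p.1) = S p.2}

theorem exists_aut_of_range_eq {V W : Type*} {P : SimpleGraph V} {H : SimpleGraph W}
    {M M' : P ↪g H} (h : Set.range ⇑M' = Set.range ⇑M) :
    ∃ ψ : P ≃g P, ∀ v, M (ψ v) = M' v := by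
  let e : V ≃ V := (Equiv.ofInjective M' M'.injective).trans
    ((Equiv.setCongr h).trans (Equiv.ofInjective M M.injective).symm)
  have he : ∀ v, M (e v) = M' v := fun v =>
    Equiv.apply_ofInjective_symm M.injective _
  refine ⟨⟨e, fun {a b} => ?_⟩, he⟩
  rw [← M.map_adj_iff, he, he, M'.map_adj_iff]

/-- Among the embeddings with a given range and given values at the `S j` with `j < i`, one
satisfying the restrictions takes the largest possible value at `S i`. -/
theorem le_of_restricted {n : ℕ} {V W : Type*} {P : SimpleGraph V} {S : Fin n ≃ V}
    {H : SimpleGraph W} [LinearOrder W] {M M' : P ↪g H}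
    (h : Set.range ⇑M' = Set.range ⇑M)
    (hM : ∀ i k : Fin n, (i, k) ∈ restrictionSet P S → M (S k) < M (S i))
    (i : Fin n) (hi : ∀ j, j < i → M (S j) = M' (S j)) : M' (S i) ≤ M (S i) := by
  obtain ⟨ψ, hψ⟩ := exists_aut_of_range_eq h
  obtain ⟨k, hk⟩ := S.surjective (ψ (S i))
  rw [← hψ, ← hk]
  by_cases hki : k = i
  · rw [hki]
  · refine (hM i k ⟨hki, ψ, fun j hj => M.injective ?_, hk.symm⟩).le
    rw [hψ, hi j hj]

theorem stmt_0 {n : ℕ} {V W : Type*} [Fintype V] (hV : Fintype.card V = n)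
    (P : SimpleGraph V) (S : Fin n ≃ V) (H : SimpleGraph W) [LinearOrder W]
    (M₀ : P ↪g H) :
    ∃! M : P ↪g H,
      Set.range ⇑M = Set.range ⇑M₀ ∧
        ∀ i k : Fin n, (i, k) ∈ restrictionSet P S → M (S k) < M (S i) := by
  have : Finite (P ≃g P) := Finite.of_injective _ DFunLike.coe_injective
  refine existsUnique_of_exists_of_unique ?_ ?_
  · obtain ⟨φ, hφ⟩ := Finite.exists_max
      (fun φ : P ≃g P => toLex (fun i : Fin n => M₀ (φ (S i))))
    refine ⟨M₀.comp φ.toEmbedding, φ.surjective.range_comp M₀, ?_⟩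
    rintro i k ⟨hki, ψ, hfix, hik⟩
    refine lt_of_not_ge fun hle => ?_
    have hne : M₀ (φ (S i)) ≠ M₀ (φ (S k)) := fun heq =>
      hki (S.injective (φ.injective (M₀.injective heq))).symm
    -- The tuple of `φ ∘ ψ` agrees with that of `φ` before `i` and is larger at `i`.
    refine (hφ (ψ.trans φ)).not_gt ⟨i, fun j hj => ?_, ?_⟩
    · change M₀ (φ (S j)) = M₀ (φ (ψ (S j)))
      rw [hfix j hj]
    · change M₀ (φ (S i)) < M₀ (φ (ψ (S i)))
      rw [hik]
      exact lt_of_le_of_ne hle hne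
  · rintro M M' ⟨hr, hM⟩ ⟨hr', hM'⟩
    have key : ∀ i, M (S i) = M' (S i) := fun i => by
      induction i using WellFoundedLT.induction with
      | ind i ih =>
        exact le_antisymm
          (le_of_restricted (hr.trans hr'.symm) hM' i fun j hj => (ih j hj).symm)
          (le_of_restricted (hr'.trans hr.symm) hM i ih)
    refine DFunLike.ext _ _ fun v => ?_
    obtain ⟨i, rfl⟩ := S.surjective v
    exact key i
end

section
/- For every natural number n ≥ 2, the path graph on n vertices has exactly 2^(n-1) valid schedules, and these valid schedules form exactly 2^(n-2) equivalence classes under the equivalence given by composition with an automorphism of the path graph. -/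
/-!
A valid schedule of a path visits, at every time, an interval containing its first vertex `S 0`,
and each new vertex extends this interval by one step to the left or to the right
(`exists_le_of_between`). Recording for each later time whether `S` is to the right of `S 0` gives a
word in `Fin m → Bool`, where the path has `m + 1` vertices. The word determines `S 0` (its value is
the number of left steps) and then, inductively, all of `S`, as each vertex is the first unvisited
one on its side (`dirs_injective`). Conversely each word is realized by an explicit schedule
(`dirs_surjective`). This gives `2 ^ m` valid schedules.

The only automorphisms of a path are the identity and the reflection (`aut_eq_or`), and composing
with the reflection complements the word. Words modulo complementation are classified by the
exclusive or of the first letter with all the others, which leaves `2 ^ (m - 1)` classes.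
-/

/-- The path graph on `n` vertices: `i` and `j` are adjacent exactly when `|i - j| = 1`. -/
def pathG (n : ℕ) : SimpleGraph (Fin n) :=
  SimpleGraph.fromRel fun i j => (i : ℕ) + 1 = (j : ℕ)

/-- A schedule `S` of a graph `P` is valid if every vertex except the first is adjacent
to some earlier vertex in the schedule. -/
def ValidSchedule {n : ℕ} {V : Type*} (P : SimpleGraph V) (S : Fin n ≃ V) : Prop :=
  ∀ i : Fin n, 0 < (i : ℕ) → ∃ j, j < i ∧ P.Adj (S j) (S i)

/-- Two schedules are equivalent if one is obtained from the other by composing with an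
automorphism of the pattern. -/
def SchedEquiv {n : ℕ} {V : Type*} (P : SimpleGraph V) (S₁ S₂ : Fin n ≃ V) : Prop :=
  ∃ φ : P ≃g P, ∀ i : Fin n, S₂ i = φ (S₁ i)

namespace PathSchedule

lemma adj_iff {n : ℕ} (i j : Fin n) :
    (pathG n).Adj i j ↔ (i : ℕ) + 1 = j ∨ (j : ℕ) + 1 = i := by
  simp only [pathG, SimpleGraph.fromRel_adj, ne_eq, Fin.ext_iff]
  omega

/-! ### A valid schedule is determined by its direction word -/

/-- The direction word of a schedule: its `k`-th letter is `true` when the vertex scheduled at time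
`k + 1` lies to the right of the starting vertex. -/
def dirs {m : ℕ} (S : Fin (m + 1) ≃ Fin (m + 1)) : Fin m → Bool :=
  fun k => decide (S 0 < S k.succ)

/-- Every vertex between the starting vertex and `S i` has been visited by time `i`. -/
lemma exists_le_of_between {m : ℕ} {S : Fin (m + 1) ≃ Fin (m + 1)}
    (hS : ValidSchedule (pathG (m + 1)) S) (i x : Fin (m + 1))
    (hx : (S 0 ≤ x ∧ x ≤ S i) ∨ (S i ≤ x ∧ x ≤ S 0)) : ∃ j ≤ i, S j = x := by
  induction i using WellFoundedLT.induction with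
  | ind i ih =>
    by_cases hxi : S i = x
    · exact ⟨i, le_rfl, hxi⟩
    rcases Nat.eq_zero_or_pos (i : ℕ) with h0 | h0
    · obtain rfl : i = 0 := Fin.ext h0
      exact absurd (by rcases hx with h | h <;> exact le_antisymm (by tauto) (by tauto)) hxi
    · obtain ⟨j, hj, hadj⟩ := hS i h0
      rw [adj_iff] at hadj
      have : (S 0 ≤ x ∧ x ≤ S j) ∨ (S j ≤ x ∧ x ≤ S 0) := by
        simp only [Fin.le_def, Fin.ext_iff] at *
        omega
      obtain ⟨k, hk, e⟩ := ih j hj this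
      exact ⟨k, hk.trans hj.le, e⟩

/-- The position of the starting vertex is the number of left steps. -/
lemma val_zero_eq {m : ℕ} (S : Fin (m + 1) ≃ Fin (m + 1)) :
    (S 0 : ℕ) = (Finset.univ.filter fun k => dirs S k = false).card := by
  have h1 : (S 0 : ℕ) = (Finset.univ.filter fun k : Fin m => S k.succ < S 0).card := by
    rw [← Fin.card_Iio (S 0)]
    symm
    apply Finset.card_bij (fun k _ => S k.succ)
    · intro k hk
      simpa using hk
    · intro a _ b _ h
      simpa using h
    · intro v hv
      obtain ⟨i, rfl⟩ := S.surjective v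
      rw [Finset.mem_Iio] at hv
      obtain ⟨k, rfl⟩ := Fin.exists_succ_eq.mpr (show i ≠ 0 by rintro rfl; exact lt_irrefl _ hv)
      exact ⟨k, by simpa using hv, rfl⟩
  rw [h1]
  congr 1
  ext k
  have : S k.succ ≠ S 0 := fun h => Fin.succ_ne_zero k (S.injective h)
  simp only [dirs, Finset.mem_filter, Finset.mem_univ, true_and, decide_eq_false_iff_not, not_lt]
  exact ⟨le_of_lt, fun h => lt_of_le_of_ne h this⟩

/-- If `S` and `T` agree before time `i`, then at time `i` the schedule `S` cannot be strictly
closer to the starting vertex than `T` on the same side. -/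
lemma not_closer {m : ℕ} {S T : Fin (m + 1) ≃ Fin (m + 1)}
    (hT : ValidSchedule (pathG (m + 1)) T) {i : Fin (m + 1)} (ih : ∀ j < i, S j = T j)
    (h : (T 0 ≤ S i ∧ S i ≤ T i) ∨ (T i ≤ S i ∧ S i ≤ T 0)) : S i = T i := by
  obtain ⟨j, hj, e⟩ := exists_le_of_between hT i _ h
  rcases hj.lt_or_eq with hj | rfl
  · rw [← ih j hj] at e
    exact absurd (S.injective e) hj.ne
  · exact e.symm

lemma dirs_injective {m : ℕ} {S T : Fin (m + 1) ≃ Fin (m + 1)}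
    (hS : ValidSchedule (pathG (m + 1)) S) (hT : ValidSchedule (pathG (m + 1)) T)
    (h : dirs S = dirs T) : S = T := by
  have h0 : S 0 = T 0 := Fin.ext (by rw [val_zero_eq, val_zero_eq, h])
  ext1 i
  induction i using WellFoundedLT.induction with
  | ind i ih =>
    cases i using Fin.cases with
    | zero => exact h0
    | succ k =>
      have hk : (S 0 < S k.succ) ↔ (T 0 < T k.succ) := by
        simpa [dirs] using congrFun h k
      rcases le_total (S k.succ) (T k.succ) with hle | hle
      · by_cases hd : S 0 < S k.succ
        · exact not_closer hT ih (Or.inl ⟨h0 ▸ hd.le, hle⟩)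
        · refine (not_closer hS (fun j hj => (ih j hj).symm) (Or.inr ⟨hle, ?_⟩)).symm
          rw [h0]
          exact not_lt.mp (fun h' => hd (hk.mpr h'))
      · by_cases hd : S 0 < S k.succ
        · exact (not_closer hS (fun j hj => (ih j hj).symm)
            (Or.inl ⟨h0 ▸ (hk.mp hd).le, hle⟩)).symm
        · exact not_closer hT ih (Or.inr ⟨hle, h0 ▸ not_lt.mp hd⟩)

/-! ### The schedule with a given direction word -/

/-- The schedule with direction word `d`, as a function to `ℕ`. The start is the number `L` of left
steps; the right step at time `k + 1` lands at `L` plus the number of right steps so far, the left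
step at the number of left steps still to come. -/
def build {m : ℕ} (d : Fin m → Bool) : Fin (m + 1) → ℕ :=
  Fin.cases (Finset.univ.filter fun j => d j = false).card fun k =>
    if d k then (Finset.univ.filter fun j => d j = false).card +
      (Finset.univ.filter fun j => d j = true ∧ j ≤ k).card
    else (Finset.univ.filter fun j => d j = false ∧ k < j).card

section build

variable {m : ℕ} (d : Fin m → Bool)

lemma build_lt (i : Fin (m + 1)) : build d i < m + 1 := by
  have key : (Finset.univ.filter fun j => d j = false).card +
      (Finset.univ.filter fun j => d j = true).card = m := by
    have := Finset.card_filter_add_card_filter_not (s := (Finset.univ : Finset (Fin m)))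
      (fun j => d j = false)
    simpa using this
  cases i using Fin.cases with
  | zero => simp only [build, Fin.cases_zero]; omega
  | succ k =>
    have h1 : (Finset.univ.filter fun j => d j = true ∧ j ≤ k).card ≤
        (Finset.univ.filter fun j => d j = true).card :=
      Finset.card_le_card fun j => by simp +contextual
    have h2 : (Finset.univ.filter fun j => d j = false ∧ k < j).card ≤
        (Finset.univ.filter fun j => d j = false).card :=
      Finset.card_le_card fun j => by simp +contextual
    simp only [build, Fin.cases_succ]
    split <;> omega

lemma build_right {k : Fin m} (hk : d k = true) : build d 0 < build d k.succ := by
  simp only [build, Fin.cases_zero, Fin.cases_succ, hk, if_true]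
  have : 0 < (Finset.univ.filter fun j => d j = true ∧ j ≤ k).card :=
    Finset.card_pos.mpr ⟨k, by simp [hk]⟩
  omega

lemma build_left {k : Fin m} (hk : d k = false) : build d k.succ < build d 0 := by
  simp only [build, Fin.cases_zero, Fin.cases_succ, hk]
  apply Finset.card_lt_card
  refine Finset.ssubset_iff_subset_ne.mpr ⟨fun j => by simp +contextual, fun h => ?_⟩
  have : k ∈ Finset.univ.filter fun j => d j = false := by simp [hk]
  rw [← h] at this
  simp at this

lemma build_right_right {k l : Fin m} (hk : d k = true) (hl : d l = true) (h : k < l) :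
    build d k.succ < build d l.succ := by
  simp only [build, Fin.cases_succ, hk, hl, if_true]
  apply Nat.add_lt_add_left
  apply Finset.card_lt_card
  refine Finset.ssubset_iff_subset_ne.mpr ⟨fun j => ?_, fun h' => ?_⟩
  · simp only [Finset.mem_filter, Finset.mem_univ, true_and]
    exact fun hj => ⟨hj.1, hj.2.trans h.le⟩
  · have : l ∈ Finset.univ.filter fun j => d j = true ∧ j ≤ l := by simp [hl]
    rw [← h'] at this
    simp only [hl, Finset.mem_filter, Finset.mem_univ, true_and] at this
    exact absurd h this.not_gt

lemma build_left_left {k l : Fin m} (hk : d k = false) (hl : d l = false) (h : k < l) :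
    build d l.succ < build d k.succ := by
  simp only [build, Fin.cases_succ, hk, hl]
  apply Finset.card_lt_card
  refine Finset.ssubset_iff_subset_ne.mpr ⟨fun j => ?_, fun h' => ?_⟩
  · simp only [Finset.mem_filter, Finset.mem_univ, true_and]
    exact fun hj => ⟨hj.1, h.trans hj.2⟩
  · have : l ∈ Finset.univ.filter fun j => d j = false ∧ k < j := by simp [hl, h]
    rw [← h'] at this
    simp at this

lemma build_injective : Function.Injective (build d) := by
  have key : ∀ i j : Fin (m + 1), i < j → build d i ≠ build d j := by
    intro i j hij
    obtain ⟨l, rfl⟩ := Fin.exists_succ_eq.mpr (Fin.ne_zero_of_lt hij)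
    cases i using Fin.cases with
    | zero =>
      cases hl : d l
      · exact (build_left d hl).ne'
      · exact (build_right d hl).ne
    | succ k =>
      rw [Fin.succ_lt_succ_iff] at hij
      cases hk : d k <;> cases hl : d l
      · exact (build_left_left d hk hl hij).ne'
      · exact ((build_left d hk).trans (build_right d hl)).ne
      · exact ((build_left d hl).trans (build_right d hk)).ne'
      · exact (build_right_right d hk hl hij).ne
  intro i j h
  rcases lt_trichotomy i j with h' | h' | h'
  · exact absurd h (key _ _ h')
  · exact h'
  · exact absurd h.symm (key _ _ h')

end build

lemma dirs_surjective {m : ℕ} (d : Fin m → Bool) :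
    ∃ S : Fin (m + 1) ≃ Fin (m + 1), ValidSchedule (pathG (m + 1)) S ∧ dirs S = d := by
  let f : Fin (m + 1) → Fin (m + 1) := fun i => ⟨build d i, build_lt d i⟩
  have hf : Function.Bijective f := Finite.injective_iff_bijective.mp fun i j h =>
    build_injective d (congrArg Fin.val h)
  have hval : ∀ i, (Equiv.ofBijective f hf i : ℕ) = build d i := fun i => rfl
  refine ⟨Equiv.ofBijective f hf, ?_, ?_⟩
  · intro i hi
    obtain ⟨k, rfl⟩ := Fin.exists_succ_eq.mpr (show i ≠ 0 by rintro rfl; simp at hi)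
    -- The neighbour of the new vertex on the side of the start is visited at some time `j`;
    -- a later visit would put it farther out or on the other side.
    cases hk : d k
    · have h1 := build_left d hk
      obtain ⟨j, hj⟩ := hf.2 ⟨build d k.succ + 1, by have := build_lt d 0; omega⟩
      have hj' : build d j = build d k.succ + 1 := congrArg Fin.val hj
      refine ⟨j, ?_, by rw [adj_iff, hval, hval]; omega⟩
      by_contra! hlt
      obtain ⟨l, rfl⟩ := Fin.exists_succ_eq.mpr
        (Fin.ne_zero_of_lt ((Fin.succ_pos k).trans_le hlt))
      rcases (Fin.succ_le_succ_iff.mp hlt).lt_or_eq with hkl | rfl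
      · cases hl : d l
        · have := build_left_left d hk hl hkl
          omega
        · have := build_right d hl
          omega
      · omega
    · have h1 := build_right d hk
      obtain ⟨j, hj⟩ := hf.2 ⟨build d k.succ - 1, by have := build_lt d k.succ; omega⟩
      have hj' : build d j = build d k.succ - 1 := congrArg Fin.val hj
      refine ⟨j, ?_, by rw [adj_iff, hval, hval]; omega⟩
      by_contra! hlt
      obtain ⟨l, rfl⟩ := Fin.exists_succ_eq.mpr
        (Fin.ne_zero_of_lt ((Fin.succ_pos k).trans_le hlt))
      rcases (Fin.succ_le_succ_iff.mp hlt).lt_or_eq with hkl | rfl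
      · cases hl : d l
        · have := build_left d hl
          omega
        · have := build_right_right d hk hl hkl
          omega
      · omega
  · funext k
    simp only [dirs, Fin.lt_def, hval]
    cases hk : d k
    · simpa using (build_left d hk).le
    · simpa using build_right d hk

lemma dirs_bijective (m : ℕ) : Function.Bijective
    fun S : {S : Fin (m + 1) ≃ Fin (m + 1) // ValidSchedule (pathG (m + 1)) S} => dirs S.1 := by
  refine ⟨fun S T h => Subtype.ext (dirs_injective S.2 T.2 h), fun d => ?_⟩
  obtain ⟨S, hS, e⟩ := dirs_surjective d
  exact ⟨⟨S, hS⟩, e⟩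

/-! ### Automorphisms of the path and equivalence of schedules -/

/-- The reflection of the path. -/
def reflection (n : ℕ) : pathG n ≃g pathG n where
  toEquiv := Fin.revPerm
  map_rel_iff' := by
    intro a b
    simp only [adj_iff, Fin.revPerm_apply, Fin.val_rev]
    omega

lemma aut_eq_or {m : ℕ} (φ : pathG (m + 2) ≃g pathG (m + 2)) :
    (∀ v, φ v = v) ∨ (∀ v, φ v = v.rev) := by
  have step : ∀ k (hk : k + 1 < m + 2), (φ ⟨k, by omega⟩ : ℕ) + 1 = φ ⟨k + 1, hk⟩ ∨
      (φ ⟨k + 1, hk⟩ : ℕ) + 1 = φ ⟨k, by omega⟩ := fun k hk => by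
    rw [← adj_iff, φ.map_adj_iff, adj_iff]
    simp
  have inj : ∀ k (hk : k + 1 + 1 < m + 2), (φ ⟨k, by omega⟩ : ℕ) ≠ φ ⟨k + 1 + 1, hk⟩ :=
    fun k hk h => by
    have := φ.injective (Fin.ext h)
    simp only [Fin.mk.injEq] at this
    omega
  -- Consecutive steps go in the same direction, so `φ` runs monotonically from `φ 0`.
  rcases step 0 (by omega) with h0 | h0
  · have key : ∀ k (hk : k + 1 < m + 2), (φ ⟨k, by omega⟩ : ℕ) + 1 = φ ⟨k + 1, hk⟩ ∧
        (φ ⟨k + 1, hk⟩ : ℕ) = φ ⟨0, by omega⟩ + (k + 1) := by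
      intro k
      induction k with
      | zero => exact fun hk => ⟨h0, h0.symm⟩
      | succ k ih =>
        intro hk
        have := ih (by omega)
        have := step (k + 1) hk
        have := inj k hk
        omega
    left
    rintro ⟨v, hv⟩
    have hlast := (key m (by omega)).2
    have := (φ ⟨m + 1, by omega⟩).isLt
    apply Fin.ext
    rcases v with _ | v
    · simp only; omega
    · have := (key v hv).2
      simp only; omega
  · have key : ∀ k (hk : k + 1 < m + 2), (φ ⟨k + 1, hk⟩ : ℕ) + 1 = φ ⟨k, by omega⟩ ∧
        (φ ⟨k + 1, hk⟩ : ℕ) + (k + 1) = φ ⟨0, by omega⟩ := by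
      intro k
      induction k with
      | zero => exact fun hk => ⟨h0, h0⟩
      | succ k ih =>
        intro hk
        have := ih (by omega)
        have := step (k + 1) hk
        have := inj k hk
        omega
    right
    rintro ⟨v, hv⟩
    have hlast := (key m (by omega)).2
    have := (φ ⟨0, by omega⟩).isLt
    apply Fin.ext
    rw [Fin.val_rev]
    rcases v with _ | v
    · simp only; omega
    · have := (key v hv).2
      simp only; omega

lemma dirs_rev {m : ℕ} {S T : Fin (m + 1) ≃ Fin (m + 1)} (h : ∀ i, T i = (S i).rev)
    (k : Fin m) : dirs T k = !dirs S k := by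
  have : S k.succ ≠ S 0 := fun h => Fin.succ_ne_zero k (S.injective h)
  simp only [dirs, h, Fin.rev_lt_rev, ← decide_not, decide_eq_decide, not_lt]
  exact ⟨le_of_lt, fun h => lt_of_le_of_ne h this⟩

/-- Two valid schedules are equivalent exactly when their words agree up to complementation. -/
lemma schedEquiv_iff {m : ℕ} {S T : Fin (m + 2) ≃ Fin (m + 2)}
    (hS : ValidSchedule (pathG (m + 2)) S) (hT : ValidSchedule (pathG (m + 2)) T) :
    SchedEquiv (pathG (m + 2)) S T ↔ dirs T = dirs S ∨ ∀ k, dirs T k = !dirs S k := by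
  constructor
  · rintro ⟨φ, hφ⟩
    rcases aut_eq_or φ with h | h
    · left
      congr 1
      ext1 i
      rw [hφ, h]
    · right
      exact dirs_rev fun i => by rw [hφ, h]
  · rintro (h | h)
    · obtain rfl := dirs_injective hT hS h
      exact ⟨RelIso.refl _, fun _ => rfl⟩
    · refine ⟨reflection _, fun i => ?_⟩
      have hR : ValidSchedule (pathG (m + 2)) (S.trans (reflection (m + 2)).toEquiv) := by
        intro i hi
        obtain ⟨j, hj, hadj⟩ := hS i hi
        exact ⟨j, hj, (reflection (m + 2)).map_adj_iff.mpr hadj⟩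
      have hd : dirs T = dirs (S.trans (reflection (m + 2)).toEquiv) := by
        funext k
        rw [h, dirs_rev (S := S) (T := S.trans (reflection (m + 2)).toEquiv) (fun i => rfl)]
      rw [dirs_injective hT hR hd]
      rfl

/-! ### Words up to complementation -/

/-- The invariant of a word under complementation: the exclusive or of its first letter with
each of the others. -/
def relDirs {m : ℕ} (d : Fin (m + 1) → Bool) : Fin m → Bool :=
  fun k => xor (d 0) (d k.succ)

lemma relDirs_eq_iff {m : ℕ} (d e : Fin (m + 1) → Bool) :
    relDirs d = relDirs e ↔ e = d ∨ ∀ k, e k = !d k := by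
  constructor
  · intro h
    by_cases h0 : e 0 = d 0
    · left
      funext k
      cases k using Fin.cases with
      | zero => exact h0
      | succ k =>
        have := congrFun h k
        simp only [relDirs] at this
        revert h0 this
        cases d 0 <;> cases e 0 <;> cases d k.succ <;> cases e k.succ <;> simp
    · right
      intro k
      cases k using Fin.cases with
      | zero => revert h0; cases d 0 <;> cases e 0 <;> simp
      | succ k =>
        have := congrFun h k
        simp only [relDirs] at this
        revert h0 this
        cases d 0 <;> cases e 0 <;> cases d k.succ <;> cases e k.succ <;> simp
  · rintro (rfl | h)
    · rfl
    · funext k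
      simp [relDirs, h]

end PathSchedule

open PathSchedule in
theorem stmt_8 (n : ℕ) (hn : 2 ≤ n) :
    Nat.card {S : Fin n ≃ Fin n // ValidSchedule (pathG n) S} = 2 ^ (n - 1) ∧
      Nat.card (Quot fun S₁ S₂ : {S : Fin n ≃ Fin n // ValidSchedule (pathG n) S} =>
        SchedEquiv (pathG n) S₁.1 S₂.1) = 2 ^ (n - 2) := by
  obtain ⟨m, rfl⟩ : ∃ m, n = m + 2 := ⟨n - 2, by omega⟩
  constructor
  · rw [Nat.card_eq_of_bijective _ (dirs_bijective (m + 1))]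
    simp
  · have hiff := fun S T : {S : Fin (m + 2) ≃ Fin (m + 2) // ValidSchedule (pathG (m + 2)) S} =>
      (schedEquiv_iff S.2 T.2).trans (relDirs_eq_iff (dirs S.1) (dirs T.1)).symm
    rw [Nat.card_eq_of_bijective
      (Quot.lift (fun S => relDirs (dirs S.1)) fun S T h => (hiff S T).mp h)
      ⟨?_, ?_⟩]
    · simp
    · rintro ⟨S⟩ ⟨T⟩ h
      exact Quot.sound ((hiff S T).mpr h)
    · intro w
      -- The word with first letter `false` followed by `w` has invariant `w`.
      obtain ⟨S, hS⟩ := (dirs_bijective (m + 1)).2 (Fin.cons false w)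
      refine ⟨Quot.mk _ S, ?_⟩
      change relDirs (dirs S.1) = w
      simp only at hS
      rw [hS]
      funext k
      simp [relDirs]
end

section
/- Let parent : Fin n → Option (Fin n) be a function such that parent j = some i implies i < j. For each i ∈ Fin n, let z(i) be the number of indices j ∈ Fin n such that (j, i) lies in the reflexive-transitive closure of the relation 'parent j = some i'. Then the Lebesgue measure of the set {x : Fin n → ℝ | x i ∈ [0, 1] for all i, and x j < x i whenever parent j = some i} equals the product over i ∈ Fin n of 1 / z(i). -/
/-!
The relation `parent` describes a forest on `Fin n`, and the volume is computed by integrating out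
the variables from the last one down. The last index `m` is always a leaf, so its variable only
occurs in its own constraint; integrating `t ^ w` over it produces `a ^ (w + 1) / (w + 1)`, where
`a` is the variable of the parent of `m` (or `1` if `m` is a root). The first factor raises the
exponent of the parent variable by `w + 1`. This makes it natural to integrate monomials
`∏ i, x i ^ w i` over the region: the integral is the product over `i` of the inverses of the
weighted subtree sizes `treeWeight parent w i`, the sum of `w j + 1` over the descendants `j` of
`i` (`lintegral_density`). Pruning the leaf `m` while transferring its weight to its parent leaves
all other subtree weights unchanged (`treeWeight_castSucc`), which closes the induction. The
theorem is the case `w = 0`.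
-/

open MeasureTheory Set

/-- The relation "`b` is the parent of `a`". -/
def IsParent {n : ℕ} (parent : Fin n → Option (Fin n)) (a b : Fin n) : Prop :=
  parent a = some b

/-- The constraint imposed on the value `t` at an index whose parent is `q`: nonnegative, and below
the value of the parent, or at most `1` at a root. -/
def Constraint {n : ℕ} (q : Option (Fin n)) (x : Fin n → ℝ) (t : ℝ) : Prop :=
  0 ≤ t ∧ (q = none → t ≤ 1) ∧ ∀ p, q = some p → t < x p

open Classical in
/-- The monomial with exponents `w`, restricted to the region cut out by the constraints. -/
noncomputable def density {n : ℕ} (parent : Fin n → Option (Fin n)) (w : Fin n → ℕ)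
    (x : Fin n → ℝ) : ENNReal :=
  ∏ j, (if Constraint (parent j) x (x j) then 1 else 0) * ENNReal.ofReal (x j) ^ w j

open Classical in
/-- The size of the subtree below `i`, each vertex `j` being counted with weight `w j + 1`. -/
noncomputable def treeWeight {n : ℕ} (parent : Fin n → Option (Fin n)) (w : Fin n → ℕ)
    (i : Fin n) : ℕ :=
  ∑ j, if Relation.ReflTransGen (IsParent parent) j i then w j + 1 else 0

lemma setLIntegral_pow (a : ℝ) (w : ℕ) :
    ∫⁻ t in Ioc 0 a, ENNReal.ofReal t ^ w
      = ENNReal.ofReal a ^ (w + 1) * ((w + 1 : ℕ) : ENNReal)⁻¹ := by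
  rcases le_total a 0 with ha | ha
  · simp [Ioc_eq_empty_of_le ha, ENNReal.ofReal_of_nonpos ha]
  · have h1 : ∫⁻ t in Ioc 0 a, ENNReal.ofReal t ^ w
        = ∫⁻ t in Ioc 0 a, ENNReal.ofReal (t ^ w) := by
      refine setLIntegral_congr_fun measurableSet_Ioc fun t ht => ?_
      exact (ENNReal.ofReal_pow ht.1.le w).symm
    have hint : IntegrableOn (fun t : ℝ => t ^ w) (Ioc 0 a) :=
      (intervalIntegrable_iff_integrableOn_Ioc_of_le ha).1
        ((continuous_pow w).intervalIntegrable 0 a)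
    rw [h1, ← ofReal_integral_eq_lintegral_ofReal hint, ← intervalIntegral.integral_of_le ha,
      integral_pow, ENNReal.ofReal_div_of_pos (by positivity), div_eq_mul_inv]
    · simp only [ne_eq, Nat.add_eq_zero_iff, one_ne_zero, and_false, not_false_eq_true, zero_pow,
        sub_zero]
      rw [ENNReal.ofReal_pow ha]
      congr 2
      rw [← Nat.cast_succ, ENNReal.ofReal_natCast]
    · filter_upwards [ae_restrict_mem measurableSet_Ioc] with t ht
      exact pow_nonneg ht.1.le w

open Classical in
/-- Integrating out a leaf with parent `q`. The right-hand side is written so that the parent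
variable, if there is one, is picked out of a product over all variables. -/
lemma lintegral_leaf {n : ℕ} (q : Option (Fin n)) (y : Fin n → ℝ) (w : ℕ) :
    ∫⁻ t, (if Constraint q y t then 1 else 0) * ENNReal.ofReal t ^ w
      = (∏ j, ENNReal.ofReal (y j) ^ (if q = some j then w + 1 else 0))
        * ((w + 1 : ℕ) : ENNReal)⁻¹ := by
  have key : ∀ s : Set ℝ, MeasurableSet s → (∀ t, Constraint q y t ↔ t ∈ s) →
      ∫⁻ t, (if Constraint q y t then 1 else 0) * ENNReal.ofReal t ^ w
        = ∫⁻ t in s, ENNReal.ofReal t ^ w := by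
    intro s hs h
    rw [← lintegral_indicator hs]
    refine lintegral_congr fun t => ?_
    by_cases ht : t ∈ s <;> simp [h, ht]
  cases q with
  | none =>
    rw [key (Icc 0 1) measurableSet_Icc (by simp [Constraint]),
      ← setLIntegral_congr Ioc_ae_eq_Icc, setLIntegral_pow]
    simp
  | some p =>
    rw [key (Ico 0 (y p)) measurableSet_Ico (by simp [Constraint]),
      setLIntegral_congr Ico_ae_eq_Ioc, setLIntegral_pow]
    congr 1
    rw [Finset.prod_eq_single p] <;> simp +contextual [eq_comm]

lemma measurableSet_constraint {n : ℕ} (q : Option (Fin n)) (j : Fin n) :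
    MeasurableSet {x : Fin n → ℝ | Constraint q x (x j)} := by
  have h0 : MeasurableSet {x : Fin n → ℝ | 0 ≤ x j} :=
    measurableSet_le measurable_const (measurable_pi_apply j)
  cases q with
  | none =>
    simpa [Constraint, ofPred_and] using
      h0.inter (measurableSet_le (measurable_pi_apply j) measurable_const)
  | some p =>
    simpa [Constraint, ofPred_and] using
      h0.inter (measurableSet_lt (measurable_pi_apply j) (measurable_pi_apply p))

lemma measurable_density {n : ℕ} (parent : Fin n → Option (Fin n)) (w : Fin n → ℕ) :
    Measurable (density parent w) := by
  unfold density
  refine Finset.measurable_fun_prod _ fun j _ => ?_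
  exact (Measurable.ite (measurableSet_constraint _ j) measurable_const measurable_const).mul
    ((ENNReal.measurable_ofReal.comp (measurable_pi_apply j)).pow_const _)

section Prune

variable {n : ℕ} {parent : Fin (n + 1) → Option (Fin (n + 1))} {parent' : Fin n → Option (Fin n)}
  {q : Option (Fin n)}

lemma reach_castSucc_iff
    (h' : ∀ j, parent j.castSucc = (parent' j).map Fin.castSucc) (j i : Fin n) :
    Relation.ReflTransGen (IsParent parent) j.castSucc i.castSucc ↔
      Relation.ReflTransGen (IsParent parent') j i := by
  constructor
  · intro h
    -- Induct from the bottom end: parents of old vertices are old vertices.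
    generalize ha : j.castSucc = a at h
    induction h using Relation.ReflTransGen.head_induction_on generalizing j with
    | refl => rw [Fin.castSucc_injective n ha]
    | head hab _ ih =>
      subst ha
      rw [IsParent, h', Option.map_eq_some_iff] at hab
      obtain ⟨c, hc, rfl⟩ := hab
      exact .head hc (ih c rfl)
  · intro h
    refine h.lift Fin.castSucc fun a b hab => ?_
    rw [IsParent] at hab
    simp [IsParent, h', hab]

lemma reach_last_castSucc_iff
    (h' : ∀ j, parent j.castSucc = (parent' j).map Fin.castSucc)
    (hq : parent (Fin.last n) = q.map Fin.castSucc) (i : Fin n) :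
    Relation.ReflTransGen (IsParent parent) (Fin.last n) i.castSucc ↔
      ∃ p, q = some p ∧ Relation.ReflTransGen (IsParent parent') p i := by
  rw [Relation.ReflTransGen.cases_head_iff]
  constructor
  · rintro (h | ⟨c, hc, h⟩)
    · exact absurd h.symm (Fin.castSucc_lt_last i).ne
    · rw [IsParent, hq, Option.map_eq_some_iff] at hc
      obtain ⟨p, hp, rfl⟩ := hc
      exact ⟨p, hp, (reach_castSucc_iff h' p i).1 h⟩
  · rintro ⟨p, hp, h⟩
    exact .inr ⟨p.castSucc, by simp [IsParent, hq, hp], (reach_castSucc_iff h' p i).2 h⟩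

lemma not_reach_castSucc_last
    (h' : ∀ j, parent j.castSucc = (parent' j).map Fin.castSucc) (j : Fin n) :
    ¬ Relation.ReflTransGen (IsParent parent) j.castSucc (Fin.last n) := by
  intro h
  generalize ha : j.castSucc = a at h
  induction h using Relation.ReflTransGen.head_induction_on generalizing j with
  | refl => exact (Fin.castSucc_lt_last j).ne ha
  | head hab _ ih =>
    subst ha
    rw [IsParent, h', Option.map_eq_some_iff] at hab
    obtain ⟨c, hc, rfl⟩ := hab
    exact ih c rfl

lemma treeWeight_last (h' : ∀ j, parent j.castSucc = (parent' j).map Fin.castSucc)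
    (w : Fin (n + 1) → ℕ) :
    treeWeight parent w (Fin.last n) = w (Fin.last n) + 1 := by
  simp [treeWeight, Fin.sum_univ_castSucc, not_reach_castSucc_last h', Relation.ReflTransGen.refl]

open Classical in
/-- Removing the last leaf and giving its weight to its parent preserves all subtree weights. -/
lemma treeWeight_castSucc
    (h' : ∀ j, parent j.castSucc = (parent' j).map Fin.castSucc)
    (hq : parent (Fin.last n) = q.map Fin.castSucc) (w : Fin (n + 1) → ℕ) (i : Fin n) :
    treeWeight parent w i.castSucc = treeWeight parent'
      (fun j => w j.castSucc + if q = some j then w (Fin.last n) + 1 else 0) i := by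
  simp only [treeWeight, Fin.sum_univ_castSucc, reach_castSucc_iff h',
    reach_last_castSucc_iff h' hq]
  have : ∀ j, (if Relation.ReflTransGen (IsParent parent') j i then
        w j.castSucc + (if q = some j then w (Fin.last n) + 1 else 0) + 1 else 0)
      = (if Relation.ReflTransGen (IsParent parent') j i then w j.castSucc + 1 else 0)
        + if q = some j ∧ Relation.ReflTransGen (IsParent parent') j i
          then w (Fin.last n) + 1 else 0 := by
    intro j
    split_ifs <;> first | omega | tauto
  simp only [this, Finset.sum_add_distrib]
  congr 1
  cases q with
  | none => simp
  | some p =>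
    rw [Finset.sum_eq_single p] <;> simp +contextual [eq_comm]

open Classical in
lemma density_snoc
    (h' : ∀ j, parent j.castSucc = (parent' j).map Fin.castSucc)
    (hq : parent (Fin.last n) = q.map Fin.castSucc) (w : Fin (n + 1) → ℕ)
    (y : Fin n → ℝ) (t : ℝ) :
    density parent w (Fin.snoc y t : Fin (n + 1) → ℝ) =
      density parent' (fun j => w j.castSucc) y *
        ((if Constraint q y t then 1 else 0) * ENNReal.ofReal t ^ w (Fin.last n)) := by
  have hc : ∀ (r : Option (Fin n)) (s : ℝ),
      Constraint (r.map Fin.castSucc) (Fin.snoc y t : Fin (n + 1) → ℝ) s ↔ Constraint r y s := by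
    intro r s
    cases r <;> simp [Constraint]
  simp [density, Fin.prod_univ_castSucc, h', hq, hc]

end Prune

/-- Raising exponents multiplies the density by the corresponding monomial. -/
lemma density_mul_prod {n : ℕ} (parent : Fin n → Option (Fin n)) (w v : Fin n → ℕ)
    (y : Fin n → ℝ) :
    density parent w y * ∏ j, ENNReal.ofReal (y j) ^ v j
      = density parent (fun j => w j + v j) y := by
  simp only [density, ← Finset.prod_mul_distrib, pow_add, mul_assoc]

/-- The weighted hook length formula, proved by pruning the last vertex, which is a leaf. -/
lemma lintegral_density (n : ℕ) (parent : Fin n → Option (Fin n))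
    (hp : ∀ j i : Fin n, parent j = some i → i < j) (w : Fin n → ℕ) :
    ∫⁻ x, density parent w x = ∏ i, (treeWeight parent w i : ENNReal)⁻¹ := by
  classical
  induction n with
  | zero =>
    simp [density, volume_pi]
  | succ n ih =>
    -- Since parents are smaller than their children, the last index is never a parent.
    have hex : ∀ j, ∃ r : Option (Fin n), parent j = r.map Fin.castSucc := by
      intro j
      cases hj : parent j with
      | none => exact ⟨none, rfl⟩
      | some i =>
        have hi : i ≠ Fin.last n := ((hp j i hj).trans_le (Fin.le_last j)).ne
        exact ⟨some (i.castPred hi), by simp⟩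
    choose parent' h' using fun j : Fin n => hex j.castSucc
    obtain ⟨q, hq⟩ := hex (Fin.last n)
    have hp' : ∀ j i, parent' j = some i → i < j := fun j i hji =>
      Fin.castSucc_lt_castSucc_iff.1 (hp j.castSucc i.castSucc (by simp [h', hji]))
    have hmp := (volume_preserving_piFinSuccAbove (fun _ : Fin (n + 1) => ℝ) (Fin.last n)).symm
    rw [← hmp.lintegral_comp (measurable_density parent w), Measure.volume_eq_prod,
      lintegral_prod_symm]
    · have hstep : ∀ y : Fin n → ℝ,
          ∫⁻ t, density parent w
            ((MeasurableEquiv.piFinSuccAbove (fun _ : Fin (n + 1) => ℝ) (Fin.last n)).symm (t, y))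
          = density parent'
              (fun j => w j.castSucc + if q = some j then w (Fin.last n) + 1 else 0) y
            * ((w (Fin.last n) + 1 : ℕ) : ENNReal)⁻¹ := by
        intro y
        have hs : ∀ t : ℝ,
            (MeasurableEquiv.piFinSuccAbove (fun _ : Fin (n + 1) => ℝ) (Fin.last n)).symm (t, y)
              = (Fin.snoc y t : Fin (n + 1) → ℝ) := by
          intro t
          simp [MeasurableEquiv.piFinSuccAbove, Fin.insertNthEquiv]
        simp only [hs, density_snoc h' hq]
        rw [lintegral_const_mul' _ _ ?_, lintegral_leaf, ← mul_assoc, density_mul_prod]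
        refine ENNReal.prod_ne_top fun j _ => ENNReal.mul_ne_top ?_ (by finiteness)
        split_ifs <;> simp
      simp only [hstep]
      rw [lintegral_mul_const _ (measurable_density _ _), ih parent' hp', Fin.prod_univ_castSucc,
        treeWeight_last h']
      simp only [treeWeight_castSucc h' hq]
    · exact ((measurable_density parent w).comp (MeasurableEquiv.measurable _)).aemeasurable

/-- The upper bound `1`, imposed on the roots only, propagates to all vertices. -/
lemma mem_region_iff {n : ℕ} (parent : Fin n → Option (Fin n))
    (hp : ∀ j i : Fin n, parent j = some i → i < j) (x : Fin n → ℝ) :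
    ((∀ i, x i ∈ Icc (0 : ℝ) 1) ∧ ∀ j i : Fin n, parent j = some i → x j < x i) ↔
      ∀ j, Constraint (parent j) x (x j) := by
  constructor
  · rintro ⟨h1, h2⟩ j
    exact ⟨(h1 j).1, fun _ => (h1 j).2, fun p => h2 j p⟩
  · intro h
    refine ⟨fun i => ⟨(h i).1, ?_⟩, fun j i => (h j).2.2 i⟩
    induction i using WellFoundedLT.induction with
    | ind i ih =>
      cases hi : parent i with
      | none => exact (h i).2.1 hi
      | some p => exact ((h i).2.2 p hi).le.trans (ih p (hp i p hi))

theorem stmt_15 {n : ℕ} (parent : Fin n → Option (Fin n))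
    (hp : ∀ j i : Fin n, parent j = some i → i < j)
    (z : Fin n → ℕ)
    (hz : ∀ i : Fin n, z i =
      Nat.card {j : Fin n |
        Relation.ReflTransGen (fun a b : Fin n => parent a = some b) j i}) :
    MeasureTheory.volume
        {x : Fin n → ℝ |
          (∀ i, x i ∈ Set.Icc (0 : ℝ) 1) ∧
            ∀ j i : Fin n, parent j = some i → x j < x i} =
      ∏ i : Fin n, 1 / (z i : ENNReal) := by
  classical
  have hS : {x : Fin n → ℝ | (∀ i, x i ∈ Set.Icc (0 : ℝ) 1) ∧
      ∀ j i : Fin n, parent j = some i → x j < x i}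
      = ⋂ j, {x | Constraint (parent j) x (x j)} := by
    ext x
    simp only [mem_ofPred_eq, mem_iInter]
    exact mem_region_iff parent hp x
  have hz' : ∀ i, z i = treeWeight parent (fun _ => 0) i := by
    intro i
    rw [hz, treeWeight, Nat.card_eq_fintype_card, Fintype.card_ofFinset]
    simp only [zero_add, Finset.sum_boole, Nat.cast_id]
    rfl
  rw [hS, ← lintegral_indicator_one
    (MeasurableSet.iInter fun j => measurableSet_constraint (parent j) j)]
  simp only [one_div, hz']
  rw [← lintegral_density n parent hp]
  refine lintegral_congr fun x => ?_
  simp only [density, pow_zero, mul_one, Finset.prod_ite_zero, Finset.prod_const_one, indicator,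
    mem_iInter, mem_ofPred_eq, Finset.mem_univ, forall_const, Pi.one_apply]
end
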